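/- arXiv:0907.2098 — 3 statements merged into one kernel-verified Lean document; each statement's English description precedes it below -/
import Mathlib

section
/- Let K be a field of characteristic 0, let R = K[x_1,…,x_r] be a polynomial ring, n a positive integer, and u = b_1 x_1^n + … + b_m x_m^n with 2 ≤ m ≤ r and b_1,…,b_m ∈ K nonzero. Then the subring K[u] is integrally closed in R: any element of R integral over K[u] already lies in K[u]. -/
open MvPolynomial

/-! If `f` is algebraic over `R[u]`, every derivation killing `u` kills `f`; applied to
`∂ₗu • ∂ₖ - ∂ₖu • ∂ₗ`, this says that the gradients of `f` and `u` are parallel. When `∂ᵢu` and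
`∂ⱼu` have no common factor (for a diagonal `u` they are, up to constants, powers of the distinct
variables `xᵢ` and `xⱼ`), parallelism forces `∂ₖf = g * ∂ₖu` for all `k` with a polynomial `g`.
Symmetry of second derivatives makes the gradients of `g` and `u` parallel in turn, and `g` has
smaller degree than `f` unless it vanishes, so by induction `g = P(u)`. If `Q' = P`, then `f - Q(u)`
has zero gradient, hence is constant. -/

theorem derivation_eq_zero_of_isAlgebraic {A B M : Type*} [CommRing A] [IsAddTorsionFree A]
    [CommRing B] [IsDomain B] [Algebra A B] [FaithfulSMul A B] [AddCommGroup M] [Module A M]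
    [Module B M] [Module.IsTorsionFree B M] (D : Derivation A B M) {f : B}
    (hf : IsAlgebraic A f) : D f = 0 := by
  obtain ⟨p, hp, hpf⟩ := hf
  induction hd : p.natDegree using Nat.strong_induction_on generalizing p with
  | _ d ih =>
    have hp0 : p.natDegree ≠ 0 := by
      intro h0
      obtain ⟨a, rfl⟩ := Polynomial.natDegree_eq_zero.mp h0
      rw [Polynomial.aeval_C, FaithfulSMul.algebraMap_eq_zero_iff] at hpf
      exact hp (by rw [hpf, Polynomial.C_0])
    have hprod : Polynomial.aeval f p.derivative • D f = 0 := by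
      rw [← D.map_aeval, hpf, map_zero]
    rcases smul_eq_zero.mp hprod with hder | hDf
    · exact ih _ (hd ▸ Polynomial.natDegree_derivative_lt hp0) p.derivative
        (Polynomial.derivative_ne_zero.mpr hp0) hder rfl
    · exact hDf

/-- A derivation `D` of `B` that vanishes on the image of `A`, regarded as an `A`-derivation. -/
def derivationOver {R : Type*} (A : Type*) {B M : Type*} [CommSemiring R] [CommSemiring A]
    [CommSemiring B] [Algebra R B] [Algebra A B] [AddCommMonoid M] [Module R M] [Module A M]
    [Module B M] [IsScalarTower A B M] (D : Derivation R B M)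
    (hD : ∀ a : A, D (algebraMap A B a) = 0) : Derivation A B M where
  toFun := D
  map_add' := D.map_add
  map_smul' a x := by
    rw [Algebra.smul_def, D.leibniz, hD, smul_zero, add_zero, algebraMap_smul, RingHom.id_apply]
  map_one_eq_zero' := D.map_one_eq_zero
  leibniz' := D.leibniz

theorem derivation_mul_derivation_comm_of_isAlgebraic {R B : Type*} [CommRing R] [CommRing B]
    [IsDomain B] [CharZero B] [Algebra R B] (D₁ D₂ : Derivation R B B) {u f : B}
    (hf : IsAlgebraic (Algebra.adjoin R {u}) f) : D₁ f * D₂ u = D₂ f * D₁ u := by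
  let D : Derivation R B B := D₂ u • D₁ - D₁ u • D₂
  have hDu : Set.EqOn D (0 : Derivation R B B) {u} := by
    simp [D, mul_comm]
  have hDf : D f = 0 := derivation_eq_zero_of_isAlgebraic
    (derivationOver (Algebra.adjoin R {u}) D fun a => Derivation.eqOn_adjoin hDu a.2) hf
  simp only [D, Derivation.sub_apply, Derivation.smul_apply, smul_eq_mul] at hDf
  linear_combination hDf

theorem polynomial_derivative_surjective {R : Type*} [Semiring R] [Algebra ℚ R] :
    Function.Surjective (Polynomial.derivative (R := R)) := by
  intro p
  induction p using Polynomial.induction_on' with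
  | add p q hp hq =>
    obtain ⟨P, rfl⟩ := hp
    obtain ⟨Q, rfl⟩ := hq
    exact ⟨P + Q, map_add _ _ _⟩
  | monomial n a =>
    refine ⟨Polynomial.monomial (n + 1) (((n + 1 : ℕ) : ℚ)⁻¹ • a), ?_⟩
    have hn : ((n + 1 : ℕ) : ℚ) ≠ 0 := Nat.cast_ne_zero.mpr n.succ_ne_zero
    rw [Polynomial.derivative_monomial_succ, smul_mul_assoc, ← Nat.cast_succ,
      ← nsmul_eq_mul', ← Nat.cast_smul_eq_nsmul ℚ, smul_smul, inv_mul_cancel₀ hn, one_smul]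

theorem eq_C_of_pderiv_eq_zero {R σ : Type*} [CommRing R] [IsAddTorsionFree R]
    {f : MvPolynomial σ R} (hf : ∀ i, pderiv i f = 0) : f = C (constantCoeff f) := by
  apply MvPolynomial.coe_injective
  apply MvPowerSeries.pderiv.ext
  · intro i
    rw [MvPowerSeries.pderiv_coe, hf, coe_C, MvPowerSeries.pderiv_C, coe_zero]
  · rw [coe_C, MvPowerSeries.constantCoeff_C, ← MvPowerSeries.coeff_zero_eq_constantCoeff_apply,
      coeff_coe, constantCoeff_eq]

theorem totalDegree_pderiv_lt {R σ : Type*} [CommSemiring R] {f : MvPolynomial σ R} {i : σ}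
    (hf : pderiv i f ≠ 0) : (pderiv i f).totalDegree < f.totalDegree := by
  obtain ⟨m, hm, hdeg⟩ := (pderiv i f).support.exists_mem_eq_sup (support_nonempty.mpr hf)
    fun m => m.sum fun _ e => e
  rw [mem_support_iff, coeff_pderiv] at hm
  have hle : (m + Finsupp.single i 1).degree ≤ f.totalDegree :=
    le_totalDegree (mem_support_iff.mpr (left_ne_zero_of_mul hm))
  rw [map_add, Finsupp.degree_single] at hle
  rw [totalDegree, hdeg]
  exact hle

theorem pderiv_comm {R σ : Type*} [CommRing R] (i j : σ) (f : MvPolynomial σ R) :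
    pderiv i (pderiv j f) = pderiv j (pderiv i f) := by
  classical
  have hlie : ⁅pderiv i, pderiv j⁆ = (0 : Derivation R (MvPolynomial σ R) (MvPolynomial σ R)) :=
    derivation_ext fun k => by
      rw [Derivation.commutator_apply]
      simp [pderiv_X, Pi.single_apply, apply_ite]
  exact sub_eq_zero.mp (DFunLike.congr_fun hlie f)

/-- The gradients of `f` and `u` are parallel: all `2 × 2` minors of the Jacobian matrix of
`(f, u)` vanish. -/
def HasParallelGradients {R σ : Type*} [CommSemiring R] (f u : MvPolynomial σ R) : Prop :=
  ∀ k l, pderiv k f * pderiv l u = pderiv l f * pderiv k u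

section

variable {R σ : Type*} [CommRing R] {u f g : MvPolynomial σ R}

theorem hasParallelGradients_of_isAlgebraic [IsDomain R] [CharZero R]
    (hf : IsAlgebraic (Algebra.adjoin R {u}) f) : HasParallelGradients f u :=
  fun k l => derivation_mul_derivation_comm_of_isAlgebraic (pderiv k) (pderiv l) hf

theorem hasParallelGradients_of_pderiv_eq_mul (hfg : ∀ k, pderiv k f = g * pderiv k u) :
    HasParallelGradients g u := by
  intro k l
  have hsymm := pderiv_comm k l f
  rw [hfg, hfg, pderiv_mul, pderiv_mul, pderiv_comm k l u] at hsymm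
  linear_combination hsymm

theorem HasParallelGradients.exists_pderiv_eq_mul [IsDomain R] {i j : σ}
    (hi : pderiv i u ≠ 0) (hij : ∀ p, pderiv i u ∣ p * pderiv j u → pderiv i u ∣ p)
    (hf : HasParallelGradients f u) : ∃ g, ∀ k, pderiv k f = g * pderiv k u := by
  obtain ⟨g, hg⟩ := hij (pderiv i f) (hf i j ▸ dvd_mul_left _ _)
  refine ⟨g, fun k => mul_right_cancel₀ hi ?_⟩
  rw [hf k i, hg]
  ring

theorem mem_adjoin_of_pderiv_eq_mul [Algebra ℚ R] (hg : g ∈ Algebra.adjoin R {u})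
    (hfg : ∀ k, pderiv k f = g * pderiv k u) : f ∈ Algebra.adjoin R {u} := by
  have : IsAddTorsionFree R := .of_module_rat R
  rw [Algebra.adjoin_singleton_eq_range_aeval] at hg ⊢
  obtain ⟨P, rfl⟩ := hg
  obtain ⟨Q, rfl⟩ := polynomial_derivative_surjective P
  have hconst : f - Polynomial.aeval u Q = C (constantCoeff (f - Polynomial.aeval u Q)) :=
    eq_C_of_pderiv_eq_zero fun k => by
      rw [map_sub, Derivation.map_aeval, hfg, smul_eq_mul]
      exact sub_self _
  rw [sub_eq_iff_eq_add.mp hconst]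
  exact add_mem (Subalgebra.algebraMap_mem _ _) ⟨Q, rfl⟩

theorem HasParallelGradients.mem_adjoin [IsDomain R] [Algebra ℚ R] {i j : σ}
    (hi : pderiv i u ≠ 0) (hij : ∀ p, pderiv i u ∣ p * pderiv j u → pderiv i u ∣ p)
    (hf : HasParallelGradients f u) : f ∈ Algebra.adjoin R {u} := by
  induction hd : f.totalDegree using Nat.strong_induction_on generalizing f with
  | _ d ih =>
    obtain ⟨g, hg⟩ := hf.exists_pderiv_eq_mul hi hij
    refine mem_adjoin_of_pderiv_eq_mul ?_ hg
    rcases eq_or_ne g 0 with rfl | hg0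
    · exact zero_mem _
    have hfi : pderiv i f ≠ 0 := hg i ▸ mul_ne_zero hg0 hi
    have hdeg : g.totalDegree < d := calc
      g.totalDegree ≤ (pderiv i f).totalDegree :=
        totalDegree_le_of_dvd_of_isDomain ⟨_, hg i⟩ hfi
      _ < f.totalDegree := totalDegree_pderiv_lt hfi
      _ = d := hd
    exact ih _ hdeg (hasParallelGradients_of_pderiv_eq_mul hg) rfl

end

theorem pderiv_sum_C_mul_X_pow {R σ ι : Type*} [CommSemiring R] [Fintype ι] {e : ι → σ}
    (he : Function.Injective e) (n : ι → ℕ) (b : ι → R) (i : ι) :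
    pderiv (e i) (∑ k, C (b k) * X (e k) ^ n k) = C (b i * n i) * X (e i) ^ (n i - 1) := by
  rw [map_sum, Finset.sum_eq_single i]
  · rw [pderiv_C_mul, pderiv_pow, pderiv_X_self, C_mul, map_natCast]
    ring
  · intro k _ hki
    rw [pderiv_C_mul, pderiv_pow, pderiv_X_of_ne (he.ne hki), mul_zero, mul_zero]
  · simp

theorem C_mul_X_pow_dvd_of_dvd_mul {R σ : Type*} [CommRing R] [IsDomain R] {i j : σ}
    (hij : i ≠ j) {a b : R} (ha : IsUnit a) (hb : b ≠ 0) {k l : ℕ} {p : MvPolynomial σ R}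
    (h : C a * X i ^ k ∣ p * (C b * X j ^ l)) : C a * X i ^ k ∣ p := by
  rw [(ha.map C).mul_left_dvd] at h ⊢
  refine X_prime.pow_dvd_of_dvd_mul_right k ?_ h
  simp [C_mul_X_pow_eq_monomial, X_dvd_monomial, hb, hij.symm]

theorem isUnit_natCast_of_algebra_rat (R : Type*) [Semiring R] [Algebra ℚ R] {n : ℕ}
    (hn : n ≠ 0) : IsUnit (n : R) := by
  simpa using (IsUnit.mk0 (n : ℚ) (Nat.cast_ne_zero.mpr hn)).map (algebraMap ℚ R)

theorem stmt6_general {R σ ι : Type*} [CommRing R] [IsDomain R] [Algebra ℚ R] [Fintype ι]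
    {e : ι → σ} (he : Function.Injective e) {n : ι → ℕ} {b : ι → R} {i j : ι} (hij : i ≠ j)
    (hni : n i ≠ 0) (hnj : n j ≠ 0) (hbi : IsUnit (b i)) (hbj : b j ≠ 0)
    {u : MvPolynomial σ R} (hu : u = ∑ k, C (b k) * X (e k) ^ n k) {f : MvPolynomial σ R}
    (hf : IsAlgebraic (Algebra.adjoin R {u}) f) : f ∈ Algebra.adjoin R {u} := by
  have hpderiv (k : ι) : pderiv (e k) u = C (b k * n k) * X (e k) ^ (n k - 1) :=
    hu ▸ pderiv_sum_C_mul_X_pow he n b k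
  have hunit : IsUnit (b i * n i) := hbi.mul (isUnit_natCast_of_algebra_rat R hni)
  have hne : b j * n j ≠ 0 := mul_ne_zero hbj (isUnit_natCast_of_algebra_rat R hnj).ne_zero
  have : CharZero R := algebraRat.charZero R
  refine (hasParallelGradients_of_isAlgebraic hf).mem_adjoin (i := e i) (j := e j) ?_ fun p hp => ?_
  · rw [hpderiv]
    exact mul_ne_zero (hunit.map C).ne_zero (pow_ne_zero _ (X_ne_zero _))
  · rw [hpderiv] at hp ⊢
    rw [hpderiv] at hp
    exact C_mul_X_pow_dvd_of_dvd_mul (he.ne hij) hunit hne hp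

/-- Let `K` be a field of characteristic 0 and `u = b₁x₁ⁿ + ⋯ + b_m x_mⁿ` in
`R = K[x₁,…,x_r]` with `2 ≤ m ≤ r` and all `bᵢ ≠ 0`. Then `K[u]` is integrally
closed in `R`. -/
theorem stmt6 {K : Type*} [Field K] [CharZero K] (r m n : ℕ)
    (hm2 : 2 ≤ m) (hmr : m ≤ r) (hn : 0 < n)
    (b : Fin m → K) (hb : ∀ i, b i ≠ 0)
    (u : MvPolynomial (Fin r) K)
    (hu : u = ∑ i : Fin m, C (b i) * (X (Fin.castLE hmr i)) ^ n)
    (f : MvPolynomial (Fin r) K)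
    (hf : IsIntegral (Algebra.adjoin K ({u} : Set (MvPolynomial (Fin r) K))) f) :
    f ∈ Algebra.adjoin K ({u} : Set (MvPolynomial (Fin r) K)) := by
  obtain ⟨i, j, hij⟩ := (Fin.nontrivial_iff_two_le.mpr hm2).exists_pair_ne
  exact stmt6_general (Fin.castLE_injective hmr) hij hn.ne' hn.ne' (hb i).isUnit (hb j) hu
    hf.isAlgebraic
end

section
/- For any nonzero rational number a, the product over all places of ℚ (all primes p together with the archimedean place) of |a|_p equals 1 (the product formula). -/
/-!
The `p`-adic norm of a positive integer `n` is the inverse of the exact power of `p` dividing `n`,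
so unique factorization says that the product of all `p`-adic norms of `n` is `1 / n`. Both sides
of `∏ |a|_p = 1 / |a|` are multiplicative and insensitive to sign, which extends this from positive
integers to nonzero rationals.
-/

section Factorization

variable {M : Type*} {f : ℕ → ℕ → M}

theorem hasFiniteMulSupport_primes_factorization [One M] (n : ℕ) (hf : ∀ p, f p 0 = 1) :
    Function.HasFiniteMulSupport fun p : Nat.Primes ↦ f p (n.factorization p) := by
  have finite_mulSupport : Function.HasFiniteMulSupport fun q : ℕ ↦ f q (n.factorization q) :=
    n.factorization.support.finite_toSet.subset fun q hq ↦
      Finsupp.mem_support_iff.mpr fun hq0 ↦ hq (by simp only [hq0, hf])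
  exact finite_mulSupport.fun_comp_of_injective Nat.Primes.coe_nat_injective

theorem finprod_primes_factorization [CommMonoid M] (n : ℕ) (hf : ∀ p, f p 0 = 1) :
    ∏ᶠ p : Nat.Primes, f p (n.factorization p) = n.factorization.prod f :=
  calc
    ∏ᶠ p : Nat.Primes, f p (n.factorization p)
      = ∏ᶠ (p : ℕ) (_ : p.Prime), f p (n.factorization p) :=
        finprod_subtype_eq_finprod_cond (f := fun p ↦ f p (n.factorization p)) Nat.Prime
    _ = n.factorization.prod f := by
        refine finprod_cond_eq_prod_of_cond_iff _ fun {p} hp ↦ ⟨fun _ ↦ ?_, ?_⟩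
        · exact Finsupp.mem_support_iff.mpr fun hp0 ↦ hp (by rw [hp0, hf])
        · exact Nat.prime_of_mem_primeFactors

end Factorization

theorem padicNorm_natCast_eq_inv_pow_factorization {p n : ℕ} (hp : p.Prime) (hn : n ≠ 0) :
    padicNorm p n = ((p : ℚ) ^ n.factorization p)⁻¹ := by
  rw [padicNorm.eq_zpow_of_nonzero (Nat.cast_ne_zero.mpr hn), padicValRat.of_nat, zpow_neg,
    zpow_natCast, Nat.factorization_def n hp]

theorem padicNorm_abs (p : ℕ) (a : ℚ) : padicNorm p |a| = padicNorm p a := by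
  rcases abs_choice a with h | h <;> rw [h]
  rw [padicNorm.neg]

theorem hasFiniteMulSupport_padicNorm_natCast {n : ℕ} (hn : n ≠ 0) :
    Function.HasFiniteMulSupport fun p : Nat.Primes ↦ padicNorm p n := by
  rw [funext fun p : Nat.Primes ↦ padicNorm_natCast_eq_inv_pow_factorization p.2 hn]
  exact hasFiniteMulSupport_primes_factorization (f := fun p k ↦ ((p : ℚ) ^ k)⁻¹) n (by simp)

theorem finprod_padicNorm_natCast {n : ℕ} (hn : n ≠ 0) :
    ∏ᶠ p : Nat.Primes, padicNorm p n = (n : ℚ)⁻¹ :=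
  calc
    ∏ᶠ p : Nat.Primes, padicNorm p n
      = ∏ᶠ p : Nat.Primes, ((p : ℚ) ^ n.factorization p)⁻¹ :=
        finprod_congr fun p ↦ padicNorm_natCast_eq_inv_pow_factorization p.2 hn
    _ = n.factorization.prod fun p k ↦ ((p : ℚ) ^ k)⁻¹ :=
        finprod_primes_factorization (f := fun p k ↦ ((p : ℚ) ^ k)⁻¹) n (by simp)
    _ = ((n.factorization.prod (· ^ ·) : ℕ) : ℚ)⁻¹ := by simp [Finsupp.prod]
    _ = (n : ℚ)⁻¹ := by rw [Nat.prod_factorization_pow_eq_self hn]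

theorem finprod_padicNorm {a : ℚ} (ha : a ≠ 0) :
    ∏ᶠ p : Nat.Primes, padicNorm p a = |a|⁻¹ := by
  have hnum : a.num.natAbs ≠ 0 := by simpa using ha
  have abs_eq : |a| = a.num.natAbs / a.den := by
    rw [Rat.abs_def, Rat.divInt_eq_div, Int.cast_natCast, Int.cast_natCast]
  have padicNorm_eq (p : Nat.Primes) :
      padicNorm p a = padicNorm p a.num.natAbs / padicNorm p a.den := by
    have : Fact (p : ℕ).Prime := ⟨p.2⟩
    rw [← padicNorm.div, ← abs_eq, padicNorm_abs]
  calc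
    ∏ᶠ p : Nat.Primes, padicNorm p a
      = (∏ᶠ p : Nat.Primes, padicNorm p a.num.natAbs) / ∏ᶠ p : Nat.Primes, padicNorm p a.den := by
        rw [finprod_congr padicNorm_eq,
          finprod_div_distrib (hasFiniteMulSupport_padicNorm_natCast hnum)
            (hasFiniteMulSupport_padicNorm_natCast a.den_nz)]
    _ = (a.num.natAbs : ℚ)⁻¹ / (a.den : ℚ)⁻¹ := by
        rw [finprod_padicNorm_natCast hnum, finprod_padicNorm_natCast a.den_nz]
    _ = |a|⁻¹ := by rw [abs_eq, inv_div_inv, inv_div]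

/-- The product formula for `ℚ`: for any nonzero rational `a`, the product of
`|a|_v` over all places (all primes together with the archimedean one) is 1. -/
theorem stmt10 (a : ℚ) (ha : a ≠ 0) :
    |a| * ∏ᶠ p : Nat.Primes, padicNorm p a = 1 := by
  rw [finprod_padicNorm ha, mul_inv_cancel₀ (abs_ne_zero.mpr ha)]
end

section
/- If an algebraic curve C over an algebraically closed field K of characteristic 0 admits a non-constant dominant rational map from a projective space ℙ^r, then it admits a non-constant rational map from the projective line ℙ^1; consequently (by Lüroth's theorem) C is rational. Equivalently: if K ⊂ L ⊂ Ω is a tower of fields of characteristic 0 with K algebraically closed, Ω purely transcendental over K, and L of transcendence degree 1 over K, then L is purely transcendental over K. -/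
/-!
Write a transcendental `t ∈ L` as `f / g` with `f`, `g` polynomials over `K` in a family of
variables. Sending each variable `x_i` to `X ^ w i`, with weights `w i` separating the finitely many
monomials of `f` and `g`, defines a `K`-algebra map `φ` to `K(X)` under which `t` stays nonconstant.
Localizing the polynomial ring at `ker φ` gives a local ring `B` to which `φ` extends and in which
`t` lives; since `φ t` is transcendental, every nonzero polynomial in `t` is a unit of `B`, so
`K(t) ⊆ B`. As `B` is integrally closed and `L` is algebraic over `K(t)`, the whole of `L` lies in
`B`. Hence `φ` embeds `L` into `K(X)`, and the classical Lüroth theorem applies.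
-/

open IntermediateField

section LocalHom

variable {K Ω L F : Type*} [Field K] [Field Ω] [Algebra K Ω] [Field L] [Algebra K L]
  [Field F] [Algebra K F] {B : Subalgebra K Ω}

theorem adjoin_simple_le_of_transcendental_map (ψ : B →ₐ[K] F) [IsLocalHom ψ] {b : B}
    (hb : Transcendental K (ψ b)) : K⟮(b : Ω)⟯.toSubalgebra ≤ B := by
  have coe_aeval (p : Polynomial K) : Polynomial.aeval (b : Ω) p = Polynomial.aeval b p :=
    Polynomial.aeval_algHom_apply B.val b p
  have inv_aeval_mem (p : Polynomial K) (hp : p ≠ 0) : (Polynomial.aeval (b : Ω) p)⁻¹ ∈ B := by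
    have hψp : ψ (Polynomial.aeval b p) ≠ 0 := by
      rw [← Polynomial.aeval_algHom_apply]
      exact fun h ↦ hp (transcendental_iff.1 hb p h)
    obtain ⟨c, hc⟩ := (isUnit_of_map_unit ψ _ hψp.isUnit).exists_right_inv
    have hc' : Polynomial.aeval (b : Ω) p * c = 1 := by
      rw [coe_aeval]
      exact congrArg Subtype.val hc
    exact inv_eq_of_mul_eq_one_right hc' ▸ c.2
  intro x hx
  obtain ⟨p, q, rfl⟩ := (mem_adjoin_simple_iff K x).1 hx
  rcases eq_or_ne q 0 with rfl | hq
  · simp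
  · rw [div_eq_mul_inv]
    exact B.mul_mem (coe_aeval p ▸ (Polynomial.aeval b p).2) (inv_aeval_mem q hq)

theorem range_le_of_isIntegrallyClosedIn [IsIntegrallyClosedIn B Ω] (i : L →ₐ[K] Ω)
    {E : IntermediateField K L} [Algebra.IsAlgebraic E L] (hE : (i.comp E.val).range ≤ B) :
    i.range ≤ B := by
  rintro _ ⟨x, rfl⟩
  let ι : E →ₐ[K] B := (i.comp E.val).codRestrict B fun y ↦ hE ⟨y, rfl⟩
  have hx : IsIntegral E x := (Algebra.IsAlgebraic.isAlgebraic x).isIntegral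
  have hix : IsIntegral B (i x) := hx.map_of_comp_eq (ι : E →+* B) (i : L →+* Ω) rfl
  obtain ⟨y, hy⟩ := IsIntegrallyClosedIn.isIntegral_iff.1 hix
  exact hy ▸ y.2

theorem nonempty_algHom_of_transcendental_map (ψ : B →ₐ[K] F) [IsLocalHom ψ]
    [IsIntegrallyClosedIn B Ω] (i : L →ₐ[K] Ω) {t : L} [Algebra.IsAlgebraic K⟮t⟯ L] {b : B}
    (hbt : (b : Ω) = i t) (hb : Transcendental K (ψ b)) : Nonempty (L →ₐ[K] F) := by
  have hKt : (i.comp K⟮t⟯.val).range ≤ B := by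
    rintro _ ⟨y, rfl⟩
    apply adjoin_simple_le_of_transcendental_map ψ hb
    rw [hbt, ← Set.image_singleton, ← adjoin_map]
    exact ⟨y, y.2, rfl⟩
  have hL : i.range ≤ B := range_le_of_isIntegrallyClosedIn i hKt
  exact ⟨ψ.comp (i.codRestrict B fun x ↦ hL ⟨x, rfl⟩)⟩

end LocalHom

section Specialization

variable {K P Ω L F : Type*} [Field K] [CommRing P] [IsDomain P] [Algebra K P]
  [Field Ω] [Algebra P Ω] [IsFractionRing P Ω] [Algebra K Ω] [IsScalarTower K P Ω]
  [Field L] [Algebra K L] [Field F] [Algebra K F]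

variable (Ω) in
theorem exists_subalgebra_isLocalHom_extending [IsIntegrallyClosed P] (φ : P →ₐ[K] F) :
    ∃ (B : Subalgebra K Ω) (ψ : B →ₐ[K] F), IsLocalHom ψ ∧ IsIntegrallyClosedIn B Ω ∧
      ∀ (p s : P), φ s ≠ 0 → ∃ b : B,
        (b : Ω) = algebraMap P Ω p / algebraMap P Ω s ∧ ψ b = φ p / φ s := by
  have hker : (RingHom.ker φ).IsPrime := RingHom.ker_isPrime φ
  let S := (RingHom.ker φ).primeCompl
  have hS : S ≤ nonZeroDivisors P := (RingHom.ker φ).primeCompl_le_nonZeroDivisors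
  let A := Localization.subalgebra.ofField Ω S hS
  have isUnit_map (s : S) : IsUnit (φ s) := IsUnit.mk0 _ s.2
  let ψ : A →ₐ[K] F := IsLocalization.liftAlgHom (M := S) isUnit_map
  have hψ (p : P) (s : S) : ψ (IsLocalization.mk' A p s) = φ p / φ s := by
    rw [eq_div_iff (isUnit_map s).ne_zero]
    have h := congrArg ψ (IsLocalization.mk'_spec A p s)
    rw [map_mul] at h
    simpa [ψ] using h
  have hψ_local : IsLocalHom ψ := by
    constructor
    intro a ha
    obtain ⟨p, s, rfl⟩ := IsLocalization.exists_mk'_eq S a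
    refine (IsLocalization.AtPrime.isUnit_mk'_iff A _ p s).2 fun hp ↦ ?_
    rw [hψ, RingHom.mem_ker.1 hp] at ha
    simp at ha
  have : IsIntegrallyClosed A := isIntegrallyClosed_of_isLocalization A S hS
  have hA : IsIntegrallyClosedIn A Ω := (isIntegrallyClosed_iff_isIntegrallyClosedIn Ω).1 this
  refine ⟨A.restrictScalars K, ψ, hψ_local, hA, fun p s hs ↦ ?_⟩
  refine ⟨IsLocalization.mk' A p (⟨s, hs⟩ : S), ?_, hψ p ⟨s, hs⟩⟩
  have hs0 : algebraMap P Ω s ≠ 0 := by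
    rw [Ne, FaithfulSMul.algebraMap_eq_zero_iff]
    rintro rfl
    exact hs (map_zero φ)
  rw [eq_div_iff hs0]
  exact congrArg Subtype.val (IsLocalization.mk'_spec A p (⟨s, hs⟩ : S))

theorem nonempty_algHom_of_specialization [IsIntegrallyClosed P] (φ : P →ₐ[K] F)
    (i : L →ₐ[K] Ω) {t : L} [Algebra.IsAlgebraic K⟮t⟯ L] {f g : P}
    (ht : i t = algebraMap P Ω f / algebraMap P Ω g) (hg : φ g ≠ 0)
    (hfg : Transcendental K (φ f / φ g)) : Nonempty (L →ₐ[K] F) := by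
  obtain ⟨B, ψ, _, _, hψ⟩ := exists_subalgebra_isLocalHom_extending Ω φ
  obtain ⟨b, hb, hψb⟩ := hψ f g hg
  exact nonempty_algHom_of_transcendental_map ψ i (hb.trans ht.symm) (hψb ▸ hfg)

end Specialization

section MonomialCurve

variable {σ R : Type*}

theorem exists_mem_pi_injOn_eval [CommRing R] [IsDomain R] {s : σ → Set R}
    (hs : ∀ i, (s i).Infinite) (T : Finset (MvPolynomial σ R)) :
    ∃ x ∈ Set.univ.pi s, Set.InjOn (MvPolynomial.eval x) (T : Set (MvPolynomial σ R)) := by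
  classical
  have hprod : ∏ d ∈ T.offDiag, (d.1 - d.2) ≠ 0 :=
    Finset.prod_ne_zero_iff.2 fun d hd ↦ sub_ne_zero.2 (Finset.mem_offDiag.1 hd).2.2
  obtain ⟨x, hxs, hx⟩ : ∃ x ∈ Set.univ.pi s,
      MvPolynomial.eval x (∏ d ∈ T.offDiag, (d.1 - d.2)) ≠ 0 := by
    by_contra! h
    exact hprod (MvPolynomial.funext_set s hs (by simpa using h))
  refine ⟨x, hxs, fun p hp q hq hpq ↦ ?_⟩
  by_contra hne
  rw [map_prod] at hx
  refine Finset.prod_ne_zero_iff.1 hx (p, q) (Finset.mem_offDiag.2 ⟨hp, hq, hne⟩) ?_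
  rw [map_sub, hpq, sub_self]

theorem exists_injOn_weight (s : Finset (σ →₀ ℕ)) :
    ∃ w : σ → ℕ, Set.InjOn (Finsupp.weight w) (s : Set (σ →₀ ℕ)) := by
  classical
  let ℓ : (σ →₀ ℕ) → MvPolynomial σ ℤ := Finsupp.weight MvPolynomial.X
  have eval_ℓ (x : σ → ℤ) (d : σ →₀ ℕ) : MvPolynomial.eval x (ℓ d) = Finsupp.weight x d := by
    simp [ℓ, Finsupp.weight_apply, Finsupp.sum]
  have hℓ : Function.Injective ℓ := by
    intro d e h
    ext i
    simpa [eval_ℓ, Finsupp.weight_single_index] using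
      congrArg (MvPolynomial.eval (Pi.single i 1)) h
  obtain ⟨x, hxs, hx⟩ := exists_mem_pi_injOn_eval
    (fun _ : σ ↦ Set.infinite_range_of_injective (Nat.cast_injective (R := ℤ))) (s.image ℓ)
  choose w hw using fun i ↦ hxs i trivial
  have weight_x (d : σ →₀ ℕ) : Finsupp.weight x d = (Finsupp.weight w d : ℤ) := by
    simp [Finsupp.weight_apply, Finsupp.sum, hw]
  refine ⟨w, fun d hd e he hde ↦ hℓ (hx ?_ ?_ ?_)⟩
  · exact Finset.mem_image_of_mem ℓ hd
  · exact Finset.mem_image_of_mem ℓ he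
  · rw [eval_ℓ, eval_ℓ, weight_x, weight_x, hde]

theorem exists_algHom_injOn_restrictSupport [CommSemiring R] (s : Finset (σ →₀ ℕ)) :
    ∃ φ : MvPolynomial σ R →ₐ[R] Polynomial R,
      Set.InjOn φ (MvPolynomial.restrictSupport R (s : Set (σ →₀ ℕ))) := by
  obtain ⟨w, hw⟩ := exists_injOn_weight s
  -- This map is the substitution `X i ↦ X ^ w i`.
  refine ⟨(Polynomial.toFinsuppIsoAlg R).symm.toAlgHom.comp
    (AddMonoidAlgebra.mapDomainAlgHom R R (Finsupp.weight w)), fun p hp q hq h ↦ ?_⟩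
  have hmap := congrArg AddMonoidAlgebra.coeff ((Polynomial.toFinsuppIsoAlg R).symm.injective h)
  exact congrArg AddMonoidAlgebra.ofCoeff (Finsupp.mapDomain_injOn _ hw hp hq hmap)

theorem exists_algHom_ratFunc_transcendental_div {K : Type*} [Field K] {f g : MvPolynomial σ K}
    (hg : g ≠ 0) (hfg : ∀ c : K, f ≠ c • g) :
    ∃ φ : MvPolynomial σ K →ₐ[K] RatFunc K, φ g ≠ 0 ∧ Transcendental K (φ f / φ g) := by
  classical
  obtain ⟨φ, hφ⟩ := exists_algHom_injOn_restrictSupport (R := K) (f.support ∪ g.support)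
  let j : Polynomial K →ₐ[K] RatFunc K := Algebra.algHom K (Polynomial K) (RatFunc K)
  have hj : Function.Injective j := RatFunc.algebraMap_injective K
  let V := MvPolynomial.restrictSupport K ((f.support ∪ g.support : Finset _) : Set (σ →₀ ℕ))
  have hf : f ∈ V := (MvPolynomial.mem_restrictSupport_iff K).2 (by simp)
  have hg' : g ∈ V := (MvPolynomial.mem_restrictSupport_iff K).2 (by simp)
  have hφ' : Set.InjOn (j.comp φ) V := hj.comp_injOn hφ
  have hφg : j.comp φ g ≠ 0 := fun h ↦ hg (hφ' hg' V.zero_mem (h.trans (map_zero _).symm))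
  refine ⟨j.comp φ, hφg, RatFunc.transcendental_of_ne_C _ ?_⟩
  rintro ⟨c, hc⟩
  refine hfg c (hφ' hf (V.smul_mem c hg') ?_)
  rw [(div_eq_iff hφg).1 hc, map_smul, RatFunc.smul_eq_C_mul]

end MonomialCurve

section Luroth

variable {K L : Type*} [Field K] [Field L] [Algebra K L]

theorem nonempty_algHom_ratFunc_of_algHom_fractionRing {σ : Type*}
    (i : L →ₐ[K] FractionRing (MvPolynomial σ K)) {t : L} (ht : Transcendental K t)
    [Algebra.IsAlgebraic K⟮t⟯ L] : Nonempty (L →ₐ[K] RatFunc K) := by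
  have hit : Transcendental K (i t) := fun h ↦ ht ((isAlgebraic_algHom_iff i i.injective).1 h)
  obtain ⟨f, g, hg, hfg⟩ := IsFractionRing.div_surjective (A := MvPolynomial σ K) (i t)
  have hg0 : g ≠ 0 := nonZeroDivisors.ne_zero hg
  have hfg' (c : K) : f ≠ c • g := by
    rintro rfl
    have hg' : algebraMap (MvPolynomial σ K) (FractionRing (MvPolynomial σ K)) g ≠ 0 :=
      IsFractionRing.to_map_ne_zero_of_mem_nonZeroDivisors hg
    have hitc : i t = algebraMap K _ c := by
      rw [← hfg, Algebra.smul_def, map_mul, mul_div_cancel_right₀ _ hg',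
        ← IsScalarTower.algebraMap_apply]
    exact hit (hitc ▸ isAlgebraic_algebraMap c)
  obtain ⟨φ, hφg, hφ⟩ := exists_algHom_ratFunc_transcendental_div hg0 hfg'
  exact nonempty_algHom_of_specialization φ i hfg.symm hφg hφ

theorem exists_adjoin_simple_eq_top_of_algHom_ratFunc [Algebra.Transcendental K L]
    (j : L →ₐ[K] RatFunc K) : ∃ x : L, Transcendental K x ∧ K⟮x⟯ = ⊤ := by
  have hj : j.fieldRange ≠ ⊥ := by
    intro h
    obtain ⟨t, ht⟩ := Algebra.Transcendental.transcendental (R := K) (A := L)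
    obtain ⟨c, hc⟩ := mem_bot.1 (h ▸ AlgHom.mem_fieldRange.2 ⟨t, rfl⟩ : j t ∈ ⊥)
    exact ht ((isAlgebraic_algHom_iff j j.injective).1 (hc ▸ isAlgebraic_algebraMap c))
  obtain ⟨x, hx : j x = RatFunc.Luroth.generator j.fieldRange⟩ :=
    RatFunc.Luroth.generator_mem (E := j.fieldRange)
  refine ⟨x, fun h ↦ ?_, map_injective j ?_⟩
  · exact RatFunc.Luroth.transcendental_generator hj (hx ▸ h.algHom j)
  · rw [adjoin_map, Set.image_singleton, hx, ← AlgHom.fieldRange_eq_map]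
    exact RatFunc.Luroth.eq_adjoin_generator.symm

end Luroth

theorem stmt18_general (K Ω : Type*) [Field K] [Field Ω] [Algebra K Ω]
    (hΩ : ∃ s : Set Ω, AlgebraicIndependent K ((↑) : s → Ω) ∧
      IntermediateField.adjoin K s = ⊤)
    (L : IntermediateField K Ω)
    (hL : ∃ t : L, IsTranscendenceBasis K (fun _ : Unit => t)) :
    ∃ x : L, Transcendental K x ∧
      IntermediateField.adjoin K ({x} : Set L) = ⊤ := by
  obtain ⟨s, hs, hsΩ⟩ := hΩ
  obtain ⟨t, ht⟩ := hL
  have ht' : Transcendental K t := ht.1.transcendental ()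
  have : Algebra.IsAlgebraic K⟮t⟯ L := by
    have := ht.isAlgebraic_field
    rwa [Set.range_const] at this
  have : Algebra.Transcendental K L := ⟨t, ht'⟩
  have hsΩ' : IntermediateField.adjoin K (Set.range ((↑) : s → Ω)) = ⊤ := by
    rw [Subtype.range_coe, hsΩ]
  let e : FractionRing (MvPolynomial s K) ≃ₐ[K] Ω :=
    hs.aevalEquivField.trans ((equivOfEq hsΩ').trans topEquiv)
  obtain ⟨j⟩ := nonempty_algHom_ratFunc_of_algHom_fractionRing (e.symm.toAlgHom.comp L.val) ht'
  exact exists_adjoin_simple_eq_top_of_algHom_ratFunc j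

/-- Generalized Lüroth theorem: if `K ⊂ L ⊂ Ω` is a tower of fields of
characteristic 0 with `K` algebraically closed, `Ω` purely transcendental over
`K`, and `L` of transcendence degree 1 over `K`, then `L` is purely
transcendental over `K`, i.e. `L = K(x)` for some element `x` transcendental
over `K`. -/
theorem stmt18 (K Ω : Type*) [Field K] [Field Ω] [Algebra K Ω]
    [IsAlgClosed K] [CharZero K]
    (hΩ : ∃ s : Set Ω, AlgebraicIndependent K ((↑) : s → Ω) ∧
      IntermediateField.adjoin K s = ⊤)
    (L : IntermediateField K Ω)
    (hL : ∃ t : L, IsTranscendenceBasis K (fun _ : Unit => t)) :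
    ∃ x : L, Transcendental K x ∧
      IntermediateField.adjoin K ({x} : Set L) = ⊤ :=
  stmt18_general K Ω hΩ L hL
end
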